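/- arXiv:1610.09129 — 3 statements merged into one kernel-verified Lean document; each statement's English description precedes it below -/
import Mathlib

section
/- Let t be a right trace on a right ideal I of a pivotal k-category C, and define the horizontal part I^= = {V ∈ I : V* ∈ I and t_V(f) = t_{V*}(f*) for all f ∈ End(V)}. Then I^= is a pseudo-monoid: it is closed under duals, retracts and tensor products. Moreover, if (V_i) is a finite family of objects of I^= and W is an object with W ∈ I and W* ∈ I which is a direct sum of the family (V_i), then W ∈ I^=. -/
open CategoryTheory MonoidalCategory

universe v u

/-- The data of a pivotal structure: a dual object together with the four
(co)evaluation morphisms. -/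
structure PivotalData (C : Type u) [Category.{v} C] [MonoidalCategory C] where
  dual : C → C
  evR : ∀ V : C, dual V ⊗ V ⟶ 𝟙_ C
  coevR : ∀ V : C, 𝟙_ C ⟶ V ⊗ dual V
  evL : ∀ V : C, V ⊗ dual V ⟶ 𝟙_ C
  coevL : ∀ V : C, 𝟙_ C ⟶ dual V ⊗ V

namespace PivotalData

variable {C : Type u} [Category.{v} C] [MonoidalCategory C] (P : PivotalData C)

/-- The left dual of a morphism. -/
def dualHomL {V W : C} (f : V ⟶ W) : P.dual W ⟶ P.dual V :=
  (ρ_ (P.dual W)).inv ≫ (P.dual W ◁ P.coevR V) ≫ (P.dual W ◁ (f ▷ P.dual V)) ≫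
    (α_ (P.dual W) W (P.dual V)).inv ≫ (P.evR W ▷ P.dual V) ≫ (λ_ (P.dual V)).hom

/-- The right dual of a morphism. -/
def dualHomR {V W : C} (f : V ⟶ W) : P.dual W ⟶ P.dual V :=
  (λ_ (P.dual W)).inv ≫ (P.coevL V ▷ P.dual W) ≫ (α_ (P.dual V) V (P.dual W)).hom ≫
    (P.dual V ◁ (f ▷ P.dual W)) ≫ (P.dual V ◁ P.evL W) ≫ (ρ_ (P.dual V)).hom

/-- The right partial trace `ptr_R(f) = (id_V ⊗ ev←_W) ∘ (f ⊗ id_{W*}) ∘ (id_V ⊗ coev→_W)`. -/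
def ptrR {V W : C} (f : V ⊗ W ⟶ V ⊗ W) : V ⟶ V :=
  (ρ_ V).inv ≫ (V ◁ P.coevR W) ≫ (α_ V W (P.dual W)).inv ≫ (f ▷ P.dual W) ≫
    (α_ V W (P.dual W)).hom ≫ (V ◁ P.evL W) ≫ (ρ_ V).hom

/-- The left partial trace `ptr_L(f) = (ev→_W ⊗ id_V) ∘ (id_{W*} ⊗ f) ∘ (coev←_W ⊗ id_V)`. -/
def ptrL {V W : C} (f : W ⊗ V ⟶ W ⊗ V) : V ⟶ V :=
  (λ_ V).inv ≫ (P.coevL W ▷ V) ≫ (α_ (P.dual W) W V).hom ≫ (P.dual W ◁ f) ≫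
    (α_ (P.dual W) W V).inv ≫ (P.evR W ▷ V) ≫ (λ_ V).hom

end PivotalData

/-- A pivotal structure on a monoidal category: `(V*, ev→, coev→)` exhibits `V*` as a left
dual of `V`, `(V*, ev←, coev←)` exhibits it as a right dual, and the left and right duals of
every morphism coincide. -/
structure Pivotal (C : Type u) [Category.{v} C] [MonoidalCategory C] extends PivotalData C where
  zig₁ : ∀ V : C, (dual V ◁ coevR V) ≫ (α_ (dual V) V (dual V)).inv ≫ (evR V ▷ dual V) =
      (ρ_ (dual V)).hom ≫ (λ_ (dual V)).inv
  zig₂ : ∀ V : C, (coevR V ▷ V) ≫ (α_ V (dual V) V).hom ≫ (V ◁ evR V) =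
      (λ_ V).hom ≫ (ρ_ V).inv
  zig₃ : ∀ V : C, (V ◁ coevL V) ≫ (α_ V (dual V) V).inv ≫ (evL V ▷ V) =
      (ρ_ V).hom ≫ (λ_ V).inv
  zig₄ : ∀ V : C, (coevL V ▷ dual V) ≫ (α_ (dual V) V (dual V)).hom ≫ (dual V ◁ evL V) =
      (λ_ (dual V)).hom ≫ (ρ_ (dual V)).inv
  dualHom_eq : ∀ {V W : C} (f : V ⟶ W), toPivotalData.dualHomL f = toPivotalData.dualHomR f

namespace Pivotal

variable {C : Type u} [Category.{v} C] [MonoidalCategory C] (P : Pivotal C)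

/-- The dual `f* : W* ⟶ V*` of a morphism `f : V ⟶ W`. -/
def dualHom {V W : C} (f : V ⟶ W) : P.dual W ⟶ P.dual V := P.toPivotalData.dualHomL f

/-- The right partial trace. -/
def ptrR {V W : C} (f : V ⊗ W ⟶ V ⊗ W) : V ⟶ V := P.toPivotalData.ptrR f

/-- The left partial trace. -/
def ptrL {V W : C} (f : W ⊗ V ⟶ W ⊗ V) : V ⟶ V := P.toPivotalData.ptrL f

/-- The twist `θ_V = ptr_R(c_{V,V})`. -/
def twist [BraidedCategory C] (V : C) : V ⟶ V := P.ptrR (β_ V V).hom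

end Pivotal

/-- `V` is a retract of `W`. -/
def IsRetractOf {C : Type u} [Category.{v} C] (V W : C) : Prop :=
  ∃ (α : V ⟶ W) (β : W ⟶ V), α ≫ β = 𝟙 V

/-- `W` is a direct sum of the finite family `Vi`. -/
def IsDirectSumOf {C : Type u} [Category.{v} C] [Preadditive C] (W : C) {n : ℕ}
    (Vi : Fin n → C) : Prop :=
  ∃ (α : ∀ i, Vi i ⟶ W) (β : ∀ i, W ⟶ Vi i),
    (∀ i, α i ≫ β i = 𝟙 (Vi i)) ∧ (∀ i j, i ≠ j → α i ≫ β j = 0) ∧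
      (∑ i, β i ≫ α i = 𝟙 W)

/-- An object is simple if its endomorphisms are exactly the scalar multiples of the
identity. -/
def IsKSimple (k : Type*) [Semiring k] {C : Type u} [Category.{v} C] [Preadditive C]
    [Linear k C] (V : C) : Prop :=
  ∀ f : V ⟶ V, ∃ a : k, f = a • 𝟙 V

/-- An object is semisimple if it is a direct sum of simple objects. -/
def IsSemisimpleObj (k : Type*) [Semiring k] {C : Type u} [Category.{v} C] [Preadditive C]
    [Linear k C] (V : C) : Prop :=
  ∃ (n : ℕ) (S : Fin n → C), (∀ i, IsKSimple k (S i)) ∧ IsDirectSumOf V S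

/-- The horizontal part `I^=` of a right ideal `I` with right trace `t`:
`V ∈ I`, `V* ∈ I` and `t_V(f) = t_{V*}(f*)` for all `f ∈ End(V)`. -/
def Horiz {k : Type*} [CommRing k] {C : Type u} [Category.{v} C] [MonoidalCategory C]
    (P : Pivotal C) (I : C → Prop) (t : ∀ V : C, I V → (V ⟶ V) → k) (V : C) : Prop :=
  ∃ (hV : I V) (hV' : I (P.dual V)),
    ∀ f : V ⟶ V, t V hV f = t (P.dual V) hV' (P.dualHom f)

namespace CategoryTheory.ExactPairing

variable {C : Type u} [Category.{v} C] [MonoidalCategory C]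

/-- A morphism into a right dual is determined by its pairing with the evaluation. -/
theorem hom_ext_evaluation {X Y Y' : C} [ExactPairing Y Y'] {g h : X ⟶ Y'}
    (H : g ▷ Y ≫ ε_ Y Y' = h ▷ Y ≫ ε_ Y Y') : g = h := by
  have key : g ≫ (λ_ Y').inv = h ≫ (λ_ Y').inv := by
    apply (tensorRightHomEquiv X Y Y' (𝟙_ C)).symm.injective
    have expand : ∀ e : X ⟶ Y', (tensorRightHomEquiv X Y Y' (𝟙_ C)).symm (e ≫ (λ_ Y').inv) =
        e ▷ Y ≫ ε_ Y Y' := by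
      intro e
      simp only [tensorRightHomEquiv, Equiv.coe_fn_symm_mk]
      monoidal
    rw [expand, expand, H]
  simpa using key

theorem rightDualIso_hom_evaluation {X Y₁ Y₂ : C} (p₁ : ExactPairing X Y₁)
    (p₂ : ExactPairing X Y₂) :
    (rightDualIso p₁ p₂).hom ▷ X ≫ p₂.evaluation' = p₁.evaluation' := by
  have h := @rightAdjointMate_comp_evaluation C _ _ X X ⟨Y₂⟩ ⟨Y₁⟩ (𝟙 X)
  rw [MonoidalCategory.whiskerLeft_id, Category.id_comp] at h
  exact h

end CategoryTheory.ExactPairing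

namespace Pivotal

variable {C : Type u} [Category.{v} C] [MonoidalCategory C] (P : Pivotal C)

/-- The exact pairing given by `ev→` and `coev→`. -/
@[reducible]
def pairR (V : C) : ExactPairing V (P.dual V) where
  coevaluation' := P.coevR V
  evaluation' := P.evR V
  coevaluation_evaluation' := P.zig₁ V
  evaluation_coevaluation' := P.zig₂ V

/-- The exact pairing given by `ev←` and `coev←`. -/
@[reducible]
def pairL (V : C) : ExactPairing (P.dual V) V where
  coevaluation' := P.coevL V
  evaluation' := P.evL V
  coevaluation_evaluation' := P.zig₃ V
  evaluation_coevaluation' := P.zig₄ V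

theorem hom_ext_evR {X V : C} {g h : X ⟶ P.dual V}
    (H : g ▷ V ≫ P.evR V = h ▷ V ≫ P.evR V) : g = h :=
  @ExactPairing.hom_ext_evaluation C _ _ X V (P.dual V) (P.pairR V) g h H

theorem dualHom_id (V : C) : P.dualHom (𝟙 V) = 𝟙 (P.dual V) :=
  @rightAdjointMate_id C _ _ V (@HasRightDual.mk _ _ _ V _ (P.pairR V))

theorem dualHom_comp {U V W : C} (f : U ⟶ V) (g : V ⟶ W) :
    P.dualHom (f ≫ g) = P.dualHom g ≫ P.dualHom f :=
  @comp_rightAdjointMate C _ _ U V W (@HasRightDual.mk _ _ _ U _ (P.pairR U))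
    (@HasRightDual.mk _ _ _ V _ (P.pairR V)) (@HasRightDual.mk _ _ _ W _ (P.pairR W)) f g

theorem dualHom_evR {V W : C} (f : V ⟶ W) :
    P.dualHom f ▷ V ≫ P.evR V = P.dual W ◁ f ≫ P.evR W :=
  @rightAdjointMate_comp_evaluation C _ _ V W (@HasRightDual.mk _ _ _ V _ (P.pairR V))
    (@HasRightDual.mk _ _ _ W _ (P.pairR W)) f

theorem dualHom_evL {V W : C} (f : V ⟶ W) :
    V ◁ P.dualHom f ≫ P.evL V = f ▷ P.dual W ≫ P.evL W := by
  let _ : HasLeftDual V := @HasLeftDual.mk _ _ _ V _ (P.pairL V)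
  let _ : HasLeftDual W := @HasLeftDual.mk _ _ _ W _ (P.pairL W)
  have h : P.dualHom f = (ᘁf) := by
    refine (P.dualHom_eq f).trans ?_
    change _ = (λ_ (P.dual W)).inv ≫ P.coevL V ▷ P.dual W ≫ (P.dual V ◁ f) ▷ P.dual W ≫
      (α_ _ _ _).hom ≫ P.dual V ◁ P.evL W ≫ (ρ_ _).hom
    simp [PivotalData.dualHomR]
  rw [h]
  exact leftAdjointMate_comp_evaluation f

theorem dualHom_add [Preadditive C] [MonoidalPreadditive C] {V W : C} (f g : V ⟶ W) :
    P.dualHom (f + g) = P.dualHom f + P.dualHom g := by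
  simp [dualHom, PivotalData.dualHomL]

/-- The canonical isomorphism from an object to its double dual. -/
def doubleDualIso (V : C) : V ≅ P.dual (P.dual V) :=
  rightDualIso (P.pairL V) (P.pairR (P.dual V))

theorem doubleDualIso_hom_evR (V : C) :
    (P.doubleDualIso V).hom ▷ P.dual V ≫ P.evR (P.dual V) = P.evL V :=
  ExactPairing.rightDualIso_hom_evaluation (P.pairL V) (P.pairR (P.dual V))

theorem doubleDualIso_hom_naturality {V W : C} (f : V ⟶ W) :
    (P.doubleDualIso V).hom ≫ P.dualHom (P.dualHom f) = f ≫ (P.doubleDualIso W).hom := by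
  apply P.hom_ext_evR
  rw [comp_whiskerRight, comp_whiskerRight, Category.assoc, Category.assoc, dualHom_evR,
    ← whisker_exchange_assoc, doubleDualIso_hom_evR, doubleDualIso_hom_evR, dualHom_evL]

theorem dualHom_injective {V W : C} {f g : V ⟶ W} (h : P.dualHom f = P.dualHom g) : f = g := by
  rw [← cancel_mono (P.doubleDualIso W).hom, ← doubleDualIso_hom_naturality,
    ← doubleDualIso_hom_naturality, h]

theorem dualHom_surjective {V W : C} (f : P.dual W ⟶ P.dual V) : ∃ h : V ⟶ W, P.dualHom h = f := by
  refine ⟨(P.doubleDualIso V).hom ≫ P.dualHom f ≫ (P.doubleDualIso W).inv,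
    P.dualHom_injective ?_⟩
  rw [← cancel_epi (P.doubleDualIso V).hom, doubleDualIso_hom_naturality]
  simp

theorem ptrR_whiskerRight_comp {U V : C} (g : U ⟶ U) (F : U ⊗ V ⟶ U ⊗ V) :
    P.ptrR (g ▷ V ≫ F) = g ≫ P.ptrR F := by
  dsimp only [ptrR, PivotalData.ptrR]
  calc
    _ = 𝟙 _ ⊗≫ (U ◁ P.coevR V ≫ g ▷ (V ⊗ P.dual V)) ⊗≫ F ▷ P.dual V ⊗≫ U ◁ P.evL V ⊗≫ 𝟙 _ := by
      monoidal
    _ = _ := by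
      rw [whisker_exchange]
      monoidal

theorem ptrR_comp_whiskerRight {U V : C} (g : U ⟶ U) (F : U ⊗ V ⟶ U ⊗ V) :
    P.ptrR (F ≫ g ▷ V) = P.ptrR F ≫ g := by
  dsimp only [ptrR, PivotalData.ptrR]
  calc
    _ = 𝟙 _ ⊗≫ U ◁ P.coevR V ⊗≫ F ▷ P.dual V ⊗≫ (g ▷ (V ⊗ P.dual V) ≫ U ◁ P.evL V) ⊗≫ 𝟙 _ := by
      monoidal
    _ = _ := by
      rw [← whisker_exchange]
      monoidal

theorem ptrR_whiskerLeft {U V W : C} (f : V ⊗ W ⟶ V ⊗ W) :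
    P.ptrR ((α_ U V W).hom ≫ U ◁ f ≫ (α_ U V W).inv) = U ◁ P.ptrR f := by
  dsimp only [ptrR, PivotalData.ptrR]
  monoidal

theorem ptrR_evR_coevL {V : C} (φ : V ⟶ V) :
    P.ptrR (P.dual V ◁ φ ≫ P.evR V ≫ P.coevL V) = P.dualHom φ := by
  dsimp only [ptrR, PivotalData.ptrR, dualHom, PivotalData.dualHomL]
  calc
    _ = (ρ_ _).inv ≫ P.dual V ◁ P.coevR V ≫ P.dual V ◁ φ ▷ P.dual V ≫
        (α_ (P.dual V) V (P.dual V)).inv ≫ P.evR V ▷ P.dual V ≫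
        (P.coevL V ▷ P.dual V ≫ (α_ _ _ _).hom ≫ P.dual V ◁ P.evL V) ≫ (ρ_ _).hom := by
      monoidal
    _ = _ := by
      rw [P.zig₄]
      simp

/-- The canonical isomorphism `(V ⊗ W)* ≅ W* ⊗ V*` determined by `ev→`. -/
def dualTensorIso (V W : C) : P.dual (V ⊗ W) ≅ P.dual W ⊗ P.dual V :=
  rightDualIso (P.pairR (V ⊗ W)) (@ExactPairing.tensor C _ _ V W _ _ (P.pairR V) (P.pairR W))

theorem dualTensorIso_hom_evR (V W : C) :
    (P.dualTensorIso V W).hom ▷ (V ⊗ W) ≫ (𝟙 _ ⊗≫ P.dual W ◁ P.evR V ▷ W ⊗≫ P.evR W) =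
      P.evR (V ⊗ W) :=
  ExactPairing.rightDualIso_hom_evaluation (P.pairR (V ⊗ W))
    (@ExactPairing.tensor C _ _ V W _ _ (P.pairR V) (P.pairR W))

/-- The dual of `f`, transported along `(V ⊗ W)* ≅ W* ⊗ V*`. -/
def dualTensorHom {V W : C} (f : V ⊗ W ⟶ V ⊗ W) :
    P.dual W ⊗ P.dual V ⟶ P.dual W ⊗ P.dual V :=
  (P.dualTensorIso V W).inv ≫ P.dualHom f ≫ (P.dualTensorIso V W).hom

theorem dualTensorHom_ev {V W : C} (f : V ⊗ W ⟶ V ⊗ W) :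
    P.dualTensorHom f ▷ (V ⊗ W) ≫ (𝟙 _ ⊗≫ P.dual W ◁ P.evR V ▷ W ⊗≫ P.evR W) =
      (P.dual W ⊗ P.dual V) ◁ f ≫ (𝟙 _ ⊗≫ P.dual W ◁ P.evR V ▷ W ⊗≫ P.evR W) := by
  rw [dualTensorHom, comp_whiskerRight, comp_whiskerRight, Category.assoc, Category.assoc,
    dualTensorIso_hom_evR, dualHom_evR, ← whisker_exchange_assoc, ← dualTensorIso_hom_evR,
    ← comp_whiskerRight_assoc, Iso.inv_hom_id, id_whiskerRight, Category.id_comp]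

/-- The dual of a left partial trace is a right partial trace, taken with `coev←` and `ev→`. -/
theorem dualHom_ptrL {V W : C} (f : V ⊗ W ⟶ V ⊗ W) :
    P.dualHom (P.ptrL f) =
      ((ρ_ (P.dual W)).inv ≫ P.dual W ◁ P.coevL V ≫ (α_ _ _ _).inv) ≫
        (P.dualTensorHom f ▷ V ≫ (α_ _ _ _).hom ≫ P.dual W ◁ P.evR V ≫ (ρ_ _).hom) := by
  apply P.hom_ext_evR
  rw [dualHom_evR]
  symm
  calc
    _ = 𝟙 _ ⊗≫ P.dual W ◁ P.coevL V ▷ W ⊗≫ (P.dualTensorHom f ▷ (V ⊗ W) ≫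
          (𝟙 _ ⊗≫ P.dual W ◁ P.evR V ▷ W ⊗≫ P.evR W)) := by
      monoidal
    _ = _ := by
      rw [dualTensorHom_ev]
      dsimp only [ptrL, PivotalData.ptrL]
      monoidal

end Pivotal

/-- `t` is a right trace on the right ideal `I`, linearity aside. -/
structure IsRightTrace {k : Type*} {C : Type u} [Category.{v} C] [MonoidalCategory C]
    (P : Pivotal C) (I : C → Prop) (t : ∀ V : C, I V → (V ⟶ V) → k) : Prop where
  tensor_mem : ∀ V W : C, I V → I (V ⊗ W)
  cyclic : ∀ (U V : C) (hU : I U) (hV : I V) (f : V ⟶ U) (g : U ⟶ V),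
    t V hV (f ≫ g) = t U hU (g ≫ f)
  ptrR : ∀ (U W : C) (hU : I U) (hUW : I (U ⊗ W)) (f : U ⊗ W ⟶ U ⊗ W),
    t (U ⊗ W) hUW f = t U hU (P.ptrR f)

namespace IsRightTrace

variable {k : Type*} {C : Type u} [Category.{v} C] [MonoidalCategory C]
  {P : Pivotal C} {I : C → Prop} {t : ∀ V : C, I V → (V ⟶ V) → k}

theorem conj (h : IsRightTrace P I t) {U V : C} (hU : I U) (hV : I V) (e : U ≅ V) (f : U ⟶ U) :
    t V hV (e.inv ≫ f ≫ e.hom) = t U hU f := by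
  rw [h.cyclic U V hU hV]
  simp

theorem ptrL (h : IsRightTrace P I t) {V W : C} (hV' : I (P.dual V)) (hW : I W)
    (f : V ⊗ W ⟶ V ⊗ W) :
    t W hW (P.ptrL f) = t (P.dual V) hV' (P.dualHom (P.ptrR f)) := by
  have hVV : I (P.dual V ⊗ V) := h.tensor_mem _ _ hV'
  have hVVW : I ((P.dual V ⊗ V) ⊗ W) := h.tensor_mem _ _ hVV
  have split : P.ptrL f = ((λ_ W).inv ≫ P.coevL V ▷ W) ≫
      ((α_ (P.dual V) V W).hom ≫ P.dual V ◁ f ≫ (α_ (P.dual V) V W).inv ≫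
        P.evR V ▷ W ≫ (λ_ W).hom) := by
    simp [Pivotal.ptrL, PivotalData.ptrL]
  have swap : ((α_ (P.dual V) V W).hom ≫ P.dual V ◁ f ≫ (α_ (P.dual V) V W).inv ≫
        P.evR V ▷ W ≫ (λ_ W).hom) ≫ ((λ_ W).inv ≫ P.coevL V ▷ W) =
      ((α_ (P.dual V) V W).hom ≫ P.dual V ◁ f ≫ (α_ (P.dual V) V W).inv) ≫
        (P.evR V ≫ P.coevL V) ▷ W := by
    simp
  rw [split, h.cyclic _ _ hVVW, swap, h.ptrR _ _ hVV, P.ptrR_comp_whiskerRight,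
    P.ptrR_whiskerLeft, h.ptrR _ _ hV', P.ptrR_evR_coevL]

theorem dualTensorHom (h : IsRightTrace P I t) {V W : C} (hW' : I (P.dual W))
    (hWV : I (P.dual W ⊗ P.dual V)) (f : V ⊗ W ⟶ V ⊗ W) :
    t (P.dual W) hW' (P.dualHom (P.ptrL f)) = t _ hWV (P.dualTensorHom f) := by
  have hWVV : I ((P.dual W ⊗ P.dual V) ⊗ V) := h.tensor_mem _ _ hWV
  have swap : (P.dualTensorHom f ▷ V ≫ (α_ _ _ _).hom ≫ P.dual W ◁ P.evR V ≫ (ρ_ _).hom) ≫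
        ((ρ_ (P.dual W)).inv ≫ P.dual W ◁ P.coevL V ≫ (α_ _ _ _).inv) =
      P.dualTensorHom f ▷ V ≫ (α_ _ _ _).hom ≫
        P.dual W ◁ (P.dual V ◁ 𝟙 V ≫ P.evR V ≫ P.coevL V) ≫ (α_ _ _ _).inv := by
    simp
  rw [P.dualHom_ptrL, h.cyclic _ _ hWVV, swap, h.ptrR _ _ hWV, P.ptrR_whiskerRight_comp,
    P.ptrR_whiskerLeft, P.ptrR_evR_coevL, P.dualHom_id, MonoidalCategory.whiskerLeft_id,
    Category.comp_id]

end IsRightTrace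

/-- the horizontal part `I^=` of a right ideal `I` carrying a right trace `t`
is a pseudo-monoid (closed under duals, retracts and tensor products), and it is stable
under direct sums in the weak sense: a direct sum `W` of a finite family of objects of
`I^=` with `W ∈ I` and `W* ∈ I` lies in `I^=`. -/
theorem horizontal_part_pseudo_monoid {k : Type*} [CommRing k] [IsDomain k]
    {C : Type u} [Category.{v} C] [MonoidalCategory C] [Preadditive C]
    [CategoryTheory.Linear k C] [MonoidalPreadditive C] [MonoidalLinear k C]
    (hk : Function.Bijective fun a : k => a • (𝟙 (𝟙_ C)))
    (P : Pivotal C)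
    -- `I` is a right ideal
    (I : C → Prop)
    (hI₁ : ∀ V W : C, I V → I (V ⊗ W))
    (hI₂ : ∀ V W : C, I W → IsRetractOf V W → I V)
    -- `t` is a right trace on `I`
    (t : ∀ V : C, I V → (V ⟶ V) → k)
    (htlin : ∀ (V : C) (hV : I V), IsLinearMap k (t V hV))
    (htcyc : ∀ (U V : C) (hU : I U) (hV : I V) (f : V ⟶ U) (g : U ⟶ V),
        t V hV (f ≫ g) = t U hU (g ≫ f))
    (htptr : ∀ (U W : C) (hU : I U) (hUW : I (U ⊗ W)) (f : U ⊗ W ⟶ U ⊗ W),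
        t (U ⊗ W) hUW f = t U hU (P.ptrR f)) :
    (∀ V : C, Horiz P I t V → Horiz P I t (P.dual V)) ∧
    (∀ V W : C, Horiz P I t W → IsRetractOf V W → Horiz P I t V) ∧
    (∀ V W : C, Horiz P I t V → Horiz P I t W → Horiz P I t (V ⊗ W)) ∧
    (∀ (n : ℕ) (Vi : Fin n → C) (W : C), (∀ i, Horiz P I t (Vi i)) →
        I W → I (P.dual W) → IsDirectSumOf W Vi → Horiz P I t W) := by
  have ht : IsRightTrace P I t := ⟨hI₁, htcyc, htptr⟩
  refine ⟨?_, ?_, ?_, ?_⟩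
  · rintro V ⟨hV, hV', h⟩
    have hV'' : I (P.dual (P.dual V)) :=
      hI₂ _ V hV ⟨(P.doubleDualIso V).inv, (P.doubleDualIso V).hom, by simp⟩
    refine ⟨hV', hV'', fun f => ?_⟩
    obtain ⟨g, rfl⟩ := P.dualHom_surjective f
    rw [← h g, ← ht.conj hV'' hV (P.doubleDualIso V).symm]
    rw [Iso.symm_inv, Iso.symm_hom, ← Category.assoc, P.doubleDualIso_hom_naturality,
      Category.assoc, Iso.hom_inv_id, Category.comp_id]
  · rintro V W ⟨hW, hW', h⟩ ⟨α, β, hαβ⟩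
    have hV : I V := hI₂ V W hW ⟨α, β, hαβ⟩
    have hdual : P.dualHom β ≫ P.dualHom α = 𝟙 (P.dual V) := by
      rw [← P.dualHom_comp, hαβ, P.dualHom_id]
    have hV' : I (P.dual V) := hI₂ _ _ hW' ⟨_, _, hdual⟩
    refine ⟨hV, hV', fun f => ?_⟩
    calc
      t V hV f = t V hV ((f ≫ α) ≫ β) := by rw [Category.assoc, hαβ, Category.comp_id]
      _ = t W hW (β ≫ f ≫ α) := htcyc _ _ _ _ _ _
      _ = t _ hW' (P.dualHom α ≫ P.dualHom f ≫ P.dualHom β) := by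
        rw [h, P.dualHom_comp, P.dualHom_comp, Category.assoc]
      _ = t _ hV' ((P.dualHom f ≫ P.dualHom β) ≫ P.dualHom α) := htcyc _ _ _ _ _ _
      _ = t _ hV' (P.dualHom f) := by rw [Category.assoc, hdual, Category.comp_id]
  · rintro V W ⟨hV, hV', hVt⟩ ⟨hW, hW', hWt⟩
    have hWV : I (P.dual W ⊗ P.dual V) := hI₁ _ _ hW'
    have hVW' : I (P.dual (V ⊗ W)) :=
      hI₂ _ _ hWV ⟨(P.dualTensorIso V W).hom, (P.dualTensorIso V W).inv, by simp⟩
    refine ⟨hI₁ _ _ hV, hVW', fun f => ?_⟩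
    rw [htptr V W hV, hVt, ← ht.ptrL hV' hW, hWt, ht.dualTensorHom hW' hWV]
    exact ht.conj hVW' hWV (P.dualTensorIso V W) (P.dualHom f)
  · rintro n Vi W hVi hW hW' ⟨α, β, -, -, hsum⟩
    refine ⟨hW, hW', fun f => ?_⟩
    choose hV hV' h using hVi
    let T : (W ⟶ W) →ₗ[k] k := (htlin W hW).mk' _
    let T' : (P.dual W ⟶ P.dual W) →ₗ[k] k := (htlin _ hW').mk' _
    let D : (W ⟶ W) →+ (P.dual W ⟶ P.dual W) := AddMonoidHom.mk' P.dualHom P.dualHom_add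
    have summand : ∀ i, T ((f ≫ β i) ≫ α i) = T' (D ((f ≫ β i) ≫ α i)) := by
      intro i
      calc
        t W hW ((f ≫ β i) ≫ α i) = t _ (hV i) (α i ≫ f ≫ β i) := htcyc _ _ _ _ _ _
        _ = t _ (hV' i) (P.dualHom (f ≫ β i) ≫ P.dualHom (α i)) := by rw [h, P.dualHom_comp]
        _ = t _ hW' (P.dualHom (α i) ≫ P.dualHom (f ≫ β i)) := htcyc _ _ _ _ _ _
        _ = t _ hW' (P.dualHom ((f ≫ β i) ≫ α i)) := by rw [P.dualHom_comp (f ≫ β i)]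
    have decomp : f = ∑ i, (f ≫ β i) ≫ α i := by
      simp only [Category.assoc, ← Preadditive.comp_sum, hsum, Category.comp_id]
    change T f = T' (D f)
    rw [decomp, map_sum, map_sum, map_sum]
    exact Finset.sum_congr rfl fun i _ => summand i
end

section
/- Let G be the group with underlying set {(κ, ε, φ) : κ ∈ ℂ∖{0}, ε ∈ ℂ, φ ∈ ℂ} and multiplication (κ, ε, φ)·(κ', ε', φ') = (κκ', ε' + εκ', φκ' + φ'), and let X = {(κ, ε, φ) ∈ G : κ + κ⁻¹ − εφκ⁻¹ = 2 or κ + κ⁻¹ − εφκ⁻¹ = −2}. Then X is small in G: for every finite family g_1, …, g_n ∈ G, the union ⋃_{i=1}^n g_iX is not all of G. -/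
open scoped Pointwise

/-- The group `G = {(κ, ε, φ) : κ ∈ ℂˣ, ε, φ ∈ ℂ}` with multiplication
`(κ, ε, φ)·(κ', ε', φ') = (κκ', ε' + εκ', φκ' + φ')`, i.e. the componentwise matrix
multiplication of the pairs `M(κ,ε,φ) = ([[1, ε], [0, κ]], [[κ, 0], [φ, 1]])`. -/
@[ext]
structure Gsl2 where
  kappa : ℂˣ
  eps : ℂ
  phi : ℂ

namespace Gsl2

instance : Mul Gsl2 :=
  ⟨fun a b => ⟨a.kappa * b.kappa, b.eps + a.eps * (b.kappa : ℂ), a.phi * (b.kappa : ℂ) + b.phi⟩⟩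

instance : One Gsl2 := ⟨⟨1, 0, 0⟩⟩

instance : Inv Gsl2 :=
  ⟨fun a => ⟨a.kappa⁻¹, -a.eps * ((a.kappa⁻¹ : ℂˣ) : ℂ), -a.phi * ((a.kappa⁻¹ : ℂˣ) : ℂ)⟩⟩

@[simp] lemma mul_kappa (a b : Gsl2) : (a * b).kappa = a.kappa * b.kappa := rfl
@[simp] lemma mul_eps (a b : Gsl2) : (a * b).eps = b.eps + a.eps * (b.kappa : ℂ) := rfl
@[simp] lemma mul_phi (a b : Gsl2) : (a * b).phi = a.phi * (b.kappa : ℂ) + b.phi := rfl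
@[simp] lemma one_kappa : (1 : Gsl2).kappa = 1 := rfl
@[simp] lemma one_eps : (1 : Gsl2).eps = 0 := rfl
@[simp] lemma one_phi : (1 : Gsl2).phi = 0 := rfl
@[simp] lemma inv_kappa (a : Gsl2) : a⁻¹.kappa = a.kappa⁻¹ := rfl
@[simp] lemma inv_eps (a : Gsl2) : a⁻¹.eps = -a.eps * ((a.kappa⁻¹ : ℂˣ) : ℂ) := rfl
@[simp] lemma inv_phi (a : Gsl2) : a⁻¹.phi = -a.phi * ((a.kappa⁻¹ : ℂˣ) : ℂ) := rfl

instance : Group Gsl2 where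
  mul_assoc a b c := by ext <;> simp [mul_assoc] <;> ring
  one_mul a := by ext <;> simp
  mul_one a := by ext <;> simp
  inv_mul_cancel a := by
    have h : ((a.kappa⁻¹ : ℂˣ) : ℂ) * (a.kappa : ℂ) = 1 := by
      rw [← Units.val_mul, inv_mul_cancel, Units.val_one]
    ext <;> simp [mul_assoc, h]

end Gsl2

/-- The singular locus `X = {(κ, ε, φ) : κ + κ⁻¹ − εφκ⁻¹ = ±2}`. -/
def singularLocus : Set Gsl2 :=
  {g | (g.kappa : ℂ) + (g.kappa : ℂ)⁻¹ - g.eps * g.phi * (g.kappa : ℂ)⁻¹ = 2 ∨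
       (g.kappa : ℂ) + (g.kappa : ℂ)⁻¹ - g.eps * g.phi * (g.kappa : ℂ)⁻¹ = -2}

/-- A monic quadratic equation over `ℂ` has finitely many solutions. -/
lemma finite_setOf_sub_mul_sub_eq (u v w : ℂ) : {t : ℂ | (t - u) * (t - v) = w}.Finite := by
  obtain ⟨d, hd⟩ := IsAlgClosed.exists_pow_nat_eq (w + ((u - v) / 2) ^ 2) two_pos
  refine (Set.toFinite {(u + v) / 2 + d, (u + v) / 2 - d}).subset fun t ht => ?_
  have ht : (t - u) * (t - v) = w := ht
  have h : (t - ((u + v) / 2 + d)) * (t - ((u + v) / 2 - d)) = 0 := by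
    linear_combination ht - hd
  rcases mul_eq_zero.mp h with h | h
  · exact Or.inl (sub_eq_zero.mp h)
  · exact Or.inr (sub_eq_zero.mp h)

/-- A left translate of the singular locus meets the line `{(1, t, t)}` in finitely many points. -/
lemma finite_setOf_mem_translate_singularLocus (g : Gsl2) :
    {t : ℂ | (⟨1, t, t⟩ : Gsl2) ∈ (fun x => g * x) '' singularLocus}.Finite := by
  set k : ℂ := ((g.kappa⁻¹ : ℂˣ) : ℂ) with hk
  refine ((finite_setOf_sub_mul_sub_eq (g.eps * k) (g.phi * k) (k ^ 2 + 1 - 2 * k)).union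
    (finite_setOf_sub_mul_sub_eq (g.eps * k) (g.phi * k) (k ^ 2 + 1 + 2 * k))).subset ?_
  rintro t ⟨x, hx, hgx⟩
  have hk0 : k ≠ 0 := Units.ne_zero _
  have hkappa : (x.kappa : ℂ) = k := by
    rw [hk, eq_inv_of_mul_eq_one_right (congrArg Gsl2.kappa hgx)]
  have heps : x.eps + g.eps * (x.kappa : ℂ) = t := congrArg Gsl2.eps hgx
  have hphi : g.phi * (x.kappa : ℂ) + x.phi = t := congrArg Gsl2.phi hgx
  rw [hkappa] at heps hphi
  have he : t - g.eps * k = x.eps := by linear_combination -heps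
  have hp : t - g.phi * k = x.phi := by linear_combination -hphi
  simp only [singularLocus, Set.mem_ofPred_eq, hkappa] at hx
  simp only [Set.mem_union, Set.mem_ofPred_eq, he, hp]
  field_simp at hx
  rcases hx with hx | hx
  · left
    linear_combination -hx
  · right
    linear_combination -hx

/-- the singular locus `X` is small in `G`: no finite family of left
translates of `X` covers `G`. -/
theorem singularLocus_small (n : ℕ) (g : Fin n → Gsl2) :
    (⋃ i, (fun x => g i * x) '' singularLocus) ≠ (Set.univ : Set Gsl2) := by
  intro h
  obtain ⟨t, ht⟩ :=
    (Set.finite_iUnion fun i => finite_setOf_mem_translate_singularLocus (g i)).exists_notMem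
  have hmem : (⟨1, t, t⟩ : Gsl2) ∈ ⋃ i, (fun x => g i * x) '' singularLocus := h ▸ Set.mem_univ _
  obtain ⟨i, hi⟩ := Set.mem_iUnion.mp hmem
  exact ht (Set.mem_iUnion.mpr ⟨i, hi⟩)
end

section
/- Let ℓ ≥ 2 be an integer and set r = ℓ if ℓ is odd and r = ℓ/2 if ℓ is even. For x ∈ ℂ write q^x = exp(2πix/ℓ) and ⟨x⟩ = q^x − q^{−x}. Then for every α ∈ ℂ with 2α ∉ ℤ, all the quantities ⟨α+r−j⟩ for j = 1, …, r−1 and ⟨rα⟩ are non-zero, and ∏_{j=1}^{r−1} ⟨j⟩/⟨α+r−j⟩ = r·⟨α⟩/⟨rα⟩. -/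
open Complex

/-- `ξ^x = exp(2πix/ℓ)`. -/
noncomputable def xiPow (ℓ : ℕ) (x : ℂ) : ℂ :=
  Complex.exp (2 * Real.pi * Complex.I * x / ℓ)

/-- `⟨x⟩ = ξ^x − ξ^{−x}`. -/
noncomputable def qbr (ℓ : ℕ) (x : ℂ) : ℂ :=
  xiPow ℓ x - xiPow ℓ (-x)

theorem xiPow_add (ℓ : ℕ) (x y : ℂ) : xiPow ℓ (x + y) = xiPow ℓ x * xiPow ℓ y := by
  rw [xiPow, xiPow, xiPow, ← Complex.exp_add]
  congr 1
  ring

theorem xiPow_nat_mul (ℓ n : ℕ) (x : ℂ) : xiPow ℓ (n * x) = xiPow ℓ x ^ n := by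
  rw [xiPow, xiPow, ← Complex.exp_nat_mul]
  congr 1
  ring

theorem xiPow_ne_zero (ℓ : ℕ) (x : ℂ) : xiPow ℓ x ≠ 0 := Complex.exp_ne_zero _

theorem xiPow_neg (ℓ : ℕ) (x : ℂ) : xiPow ℓ (-x) = (xiPow ℓ x)⁻¹ := by
  rw [xiPow, xiPow, ← Complex.exp_neg]
  congr 1
  ring

theorem qbr_eq_mul (ℓ : ℕ) (x : ℂ) : qbr ℓ x = xiPow ℓ x * (1 - xiPow ℓ (-2 * x)) := by
  rw [mul_sub, ← xiPow_add, mul_one, qbr]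
  ring_nf

theorem isPrimitiveRoot_xiPow_neg_two {ℓ r : ℕ} (hℓ : ℓ ≠ 0)
    (hrodd : Odd ℓ → r = ℓ) (hreven : Even ℓ → 2 * r = ℓ) :
    IsPrimitiveRoot (xiPow ℓ (-2)) r := by
  rw [xiPow_neg]
  apply IsPrimitiveRoot.inv
  rcases Nat.even_or_odd ℓ with h | h
  · obtain rfl := hreven h
    have hr : r ≠ 0 := by omega
    have h2 : xiPow (2 * r) 2 = exp (2 * Real.pi * I / r) := by
      rw [xiPow]
      congr 1
      push_cast
      field_simp
    rw [h2]
    exact Complex.isPrimitiveRoot_exp r hr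
  · obtain rfl := hrodd h
    have h2 : xiPow r 2 = exp (2 * Real.pi * I / r) ^ 2 := by
      rw [xiPow, ← Complex.exp_nat_mul]
      congr 1
      push_cast
      ring
    rw [h2]
    exact (Complex.isPrimitiveRoot_exp r hℓ).pow_of_coprime 2 (Nat.coprime_two_left.mpr h)

/-- The product formula `1 - y ^ n = ∏ (1 - ζ ^ j * y)` for a primitive `n`-th root `ζ`. -/
theorem IsPrimitiveRoot.prod_range_one_sub_pow_mul {R : Type*} [CommRing R] [IsDomain R]
    {n : ℕ} (hn : 0 < n) {ζ : R} (hζ : IsPrimitiveRoot ζ n) (y : R) :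
    ∏ j ∈ Finset.range n, (1 - ζ ^ j * y) = 1 - y ^ n := by
  have h := congrArg (Polynomial.eval 1) (X_pow_sub_C_eq_prod hζ hn (rfl : y ^ n = y ^ n))
  simpa [Polynomial.eval_prod] using h.symm

theorem prod_range_qbr_add {ℓ r : ℕ} (hr : 0 < r) (hζ : IsPrimitiveRoot (xiPow ℓ (-2)) r)
    (α : ℂ) :
    ∏ j ∈ Finset.range r, qbr ℓ (α + j) =
      (∏ j ∈ Finset.range r, xiPow ℓ j) * qbr ℓ (r * α) := by
  have h (j : ℕ) : qbr ℓ (α + j) =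
      xiPow ℓ α * xiPow ℓ j * (1 - xiPow ℓ (-2) ^ j * xiPow ℓ (-2 * α)) := by
    rw [qbr_eq_mul, xiPow_add, ← xiPow_nat_mul, ← xiPow_add ℓ (j * -2)]
    ring_nf
  simp_rw [h, Finset.prod_mul_distrib, hζ.prod_range_one_sub_pow_mul hr, qbr_eq_mul ℓ (r * α),
    xiPow_nat_mul, mul_left_comm (-2 : ℂ), xiPow_nat_mul]
  simp only [Finset.prod_const, Finset.card_range]
  ring

theorem prod_range_qbr_succ {ℓ n : ℕ} (hζ : IsPrimitiveRoot (xiPow ℓ (-2)) (n + 1)) :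
    ∏ j ∈ Finset.range n, qbr ℓ ((j + 1 : ℕ) : ℂ) =
      (∏ j ∈ Finset.range (n + 1), xiPow ℓ j) * (n + 1 : ℕ) := by
  have h (j : ℕ) : qbr ℓ (j : ℂ) = xiPow ℓ j * (1 - xiPow ℓ (-2) ^ j) := by
    rw [qbr_eq_mul, ← xiPow_nat_mul, mul_comm (-2 : ℂ)]
  simp_rw [h, Finset.prod_mul_distrib, hζ.prod_one_sub_pow_eq_order, Finset.prod_range_succ']
  simp [xiPow]

theorem qbr_nat_mul_ne_zero {ℓ r : ℕ} (hℓ : ℓ ≠ 0)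
    (hrodd : Odd ℓ → r = ℓ) (hreven : Even ℓ → 2 * r = ℓ)
    {α : ℂ} (hα : ∀ n : ℤ, 2 * α ≠ n) : qbr ℓ (r * α) ≠ 0 := by
  rw [qbr_eq_mul]
  refine mul_ne_zero (xiPow_ne_zero _ _) (sub_ne_zero.mpr fun h => ?_)
  obtain ⟨m, hm⟩ := Complex.exp_eq_one_iff.mp h.symm
  have hℓ' : (ℓ : ℂ) ≠ 0 := Nat.cast_ne_zero.mpr hℓ
  have hm' : -2 * (r * α) = m * ℓ := by
    apply mul_left_cancel₀ Complex.two_pi_I_ne_zero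
    rw [div_eq_iff hℓ'] at hm
    linear_combination hm
  rcases Nat.even_or_odd ℓ with he | ho
  · obtain rfl := hreven he
    have hr : (r : ℂ) ≠ 0 := Nat.cast_ne_zero.mpr (by omega)
    apply hα (-2 * m)
    apply mul_left_cancel₀ hr
    push_cast at hm' ⊢
    linear_combination -hm'
  · obtain rfl := hrodd ho
    apply hα (-m)
    apply mul_left_cancel₀ hℓ'
    push_cast
    linear_combination -hm'

/-- for `ℓ ≥ 2`, `r = ℓ` if `ℓ` is odd and `r = ℓ/2` if `ℓ` is even, and any
`α ∈ ℂ` with `2α ∉ ℤ`, all the quantities `⟨α+r−j⟩` (`j = 1, …, r−1`) and `⟨rα⟩` are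
non-zero, and `∏_{j=1}^{r−1} ⟨j⟩/⟨α+r−j⟩ = r⟨α⟩/⟨rα⟩`. -/
theorem modified_dimension_identity (ℓ : ℕ) (hℓ : 2 ≤ ℓ) (r : ℕ)
    (hrodd : Odd ℓ → r = ℓ) (hreven : Even ℓ → 2 * r = ℓ)
    (α : ℂ) (hα : ∀ n : ℤ, 2 * α ≠ (n : ℂ)) :
    (∀ j ∈ Finset.Icc 1 (r - 1), qbr ℓ (α + (r : ℂ) - (j : ℂ)) ≠ 0) ∧
    qbr ℓ ((r : ℂ) * α) ≠ 0 ∧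
    (∏ j ∈ Finset.Icc 1 (r - 1), qbr ℓ ((j : ℕ) : ℂ) / qbr ℓ (α + (r : ℂ) - (j : ℂ)))
      = (r : ℂ) * qbr ℓ α / qbr ℓ ((r : ℂ) * α) := by
  have hℓ0 : ℓ ≠ 0 := by omega
  have hζ := isPrimitiveRoot_xiPow_neg_two hℓ0 hrodd hreven
  have hne := qbr_nat_mul_ne_zero hℓ0 hrodd hreven hα
  obtain ⟨n, rfl⟩ : ∃ n, r = n + 1 := by
    refine Nat.exists_eq_succ_of_ne_zero fun hr => ?_
    rcases Nat.even_or_odd ℓ with h | h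
    · have := hreven h
      omega
    · have := hrodd h
      omega
  have hprod := prod_range_qbr_add n.succ_pos hζ α
  have hprod_ne : ∏ j ∈ Finset.range (n + 1), qbr ℓ (α + j) ≠ 0 := by
    rw [hprod]
    exact mul_ne_zero (Finset.prod_ne_zero_iff.mpr fun _ _ => xiPow_ne_zero _ _) hne
  have hterm := Finset.prod_ne_zero_iff.mp hprod_ne
  have hcast (j : ℕ) (hj : j ≤ n + 1) :
      α + ((n + 1 : ℕ) : ℂ) - j = α + ((n + 1 - j : ℕ) : ℂ) := by
    rw [Nat.cast_sub hj]
    ring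
  have hden : ∏ j ∈ Finset.Icc 1 n, qbr ℓ (α + ((n + 1 : ℕ) : ℂ) - j) =
      ∏ j ∈ Finset.range n, qbr ℓ (α + ((j + 1 : ℕ) : ℂ)) := by
    rw [← Finset.prod_range_reflect, Finset.range_eq_Ico,
      ← Finset.Ico_succ_right_eq_Icc, Finset.prod_Ico_eq_prod_range, Finset.range_eq_Ico]
    refine Finset.prod_congr (by simp) fun j hj => ?_
    have hj' : j < n := by simpa using hj
    rw [hcast _ (by omega)]
    congr 4
    omega
  have hnum : ∏ j ∈ Finset.Icc 1 n, qbr ℓ (j : ℂ) =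
      ∏ j ∈ Finset.range n, qbr ℓ ((j + 1 : ℕ) : ℂ) := by
    rw [← Finset.Ico_succ_right_eq_Icc, Finset.prod_Ico_eq_prod_range]
    exact Finset.prod_congr (by simp) fun j _ => by rw [add_comm 1 j]
  rw [Nat.add_sub_cancel]
  refine ⟨fun j hj => ?_, hne, ?_⟩
  · obtain ⟨hj1, hjn⟩ := Finset.mem_Icc.mp hj
    rw [hcast j (by omega)]
    exact hterm _ (Finset.mem_range.mpr (by omega))
  · rw [Finset.prod_range_succ'] at hprod hprod_ne
    rw [Finset.prod_div_distrib, hden, hnum, prod_range_qbr_succ hζ,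
      div_eq_div_iff (left_ne_zero_of_mul hprod_ne) hne]
    rw [Nat.cast_zero, add_zero] at hprod
    linear_combination -((n + 1 : ℕ) : ℂ) * hprod
end
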